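/- arXiv:1806.03523 — 5 statements merged into one kernel-verified Lean document; each statement's English description precedes it below -/
import Mathlib

section
/- Let a and b be ideals of R linked by I over M (i.e., I ⊆ a ∩ b is generated by an M-regular sequence, bM = IM :_M a, and aM = IM :_M b, with aM ≠ M ≠ bM). Then √(I + Ann_R M) = √((a ∩ b) + Ann_R M). -/
universe u

open RingTheory.Sequence CategoryTheory

noncomputable section

/-- `N :_M a`, set of `m : M` with `a • m ⊆ N`. -/
def Submodule.modColon {R : Type u} [CommRing R] {M : Type u} [AddCommGroup M] [Module R M]
    (N : Submodule R M) (a : Ideal R) : Submodule R M :=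
  ⨅ r ∈ a, N.comap (LinearMap.lsmul R M r)

/-- The ideals `a` and `b` are linked by `I` over `M`: `I ⊆ a ⊓ b` is generated by an
`M`-regular sequence, `bM = IM :_M a`, `aM = IM :_M b`, and `aM ≠ M ≠ bM`. -/
def Ideal.IsLinkedBy {R : Type u} [CommRing R] (M : Type u) [AddCommGroup M] [Module R M]
    (I a b : Ideal R) : Prop :=
  (∃ rs : List R, RingTheory.Sequence.IsRegular M rs ∧ I = Ideal.ofList rs) ∧
  I ≤ a ⊓ b ∧
  a • (⊤ : Submodule R M) ≠ ⊤ ∧ b • (⊤ : Submodule R M) ≠ ⊤ ∧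
  Submodule.modColon (I • (⊤ : Submodule R M)) a = b • (⊤ : Submodule R M) ∧
  Submodule.modColon (I • (⊤ : Submodule R M)) b = a • (⊤ : Submodule R M)

/-- Cohomological dimension `cd(a, M) = sup { i | H^i_a(M) ≠ 0 }`. -/
def cohDim {R : Type u} [CommRing R] (a : Ideal R) (M : Type u) [AddCommGroup M]
    [Module R M] : ℕ∞ :=
  sSup {n : ℕ∞ | ∃ i : ℕ, n = i ∧ Nontrivial ↥((localCohomology a i).obj (ModuleCat.of R M))}

/-- `grade_M(a)`: the supremum of lengths of `M`-regular sequences contained in `a`. -/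
def gradeM {R : Type u} [CommRing R] (a : Ideal R) (M : Type u) [AddCommGroup M]
    [Module R M] : ℕ :=
  sSup {n : ℕ | ∃ rs : List R, rs.length = n ∧ (∀ r ∈ rs, r ∈ a) ∧
    RingTheory.Sequence.IsRegular M rs}

variable {R : Type u} [CommRing R] [IsNoetherianRing R]
variable {M : Type u} [AddCommGroup M] [Module R M] [Module.Finite R M] [Nontrivial M]

/-!
Linkage gives `abM = a(IM :_M a) ⊆ IM`, so `ab` annihilates `M / IM`. Since `M` is finitely
generated, `Supp (M / IM) = V(I) ∩ Supp M`, so the annihilator of `M / IM` agrees with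
`I + Ann M` up to radical. Finally `ab` and `a ∩ b` have the same radical.
-/

theorem le_modColon_iff_smul_le {A E : Type u} [CommRing A] [AddCommGroup E] [Module A E]
    {a : Ideal A} {N P : Submodule A E} : P ≤ N.modColon a ↔ a • P ≤ N := by
  simp only [Submodule.modColon, le_iInf_iff, Submodule.smul_le]
  rfl

section

variable {A E : Type*} [CommRing A] [AddCommGroup E] [Module A E]

theorem radical_annihilator_quotient_smul_top [Module.Finite A E] (I : Ideal A) :
    (Module.annihilator A (E ⧸ (I • ⊤ : Submodule A E))).radical =
      (I + Module.annihilator A E).radical := by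
  rw [← PrimeSpectrum.zeroLocus_eq_iff, ← Module.support_eq_zeroLocus, Module.support_quotient,
    Module.support_eq_zeroLocus, Submodule.add_eq_sup, PrimeSpectrum.zeroLocus_sup,
    Set.inter_comm]

theorem le_annihilator_quotient_iff_smul_top_le {J : Ideal A} {N : Submodule A E} :
    J ≤ Module.annihilator A (E ⧸ N) ↔ J • (⊤ : Submodule A E) ≤ N := by
  rw [Submodule.annihilator_quotient, SetLike.le_def, Submodule.smul_le]
  simp only [Submodule.mem_colon, Set.mem_univ, Submodule.mem_top]

theorem le_radical_add_annihilator_of_smul_top_le [Module.Finite A E] {I J : Ideal A}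
    (h : J • (⊤ : Submodule A E) ≤ I • ⊤) :
    J ≤ (I + Module.annihilator A E).radical := by
  rw [← radical_annihilator_quotient_smul_top]
  exact (le_annihilator_quotient_iff_smul_top_le.mpr h).trans Ideal.le_radical

theorem stmt1_general [Module.Finite A E] {I a b : Ideal A} (hI : I ≤ a ⊓ b)
    (hab : a • b • (⊤ : Submodule A E) ≤ I • ⊤) :
    (I + Module.annihilator A E).radical = ((a ⊓ b) + Module.annihilator A E).radical := by
  have hmul : a * b ≤ (I + Module.annihilator A E).radical :=
    le_radical_add_annihilator_of_smul_top_le (by rwa [Submodule.mul_smul])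
  have hinf : a ⊓ b ≤ (I + Module.annihilator A E).radical := calc
    a ⊓ b ≤ (a ⊓ b).radical := Ideal.le_radical
    _ = (a * b).radical := by rw [Ideal.radical_inf, Ideal.radical_mul]
    _ ≤ (I + Module.annihilator A E).radical := Ideal.radical_le_radical_iff.mpr hmul
  exact le_antisymm (Ideal.radical_mono (sup_le_sup_right hI _))
    (Ideal.radical_le_radical_iff.mpr (sup_le hinf (le_sup_right.trans Ideal.le_radical)))

end

theorem stmt1 (I a b : Ideal R) (h : Ideal.IsLinkedBy M I a b) :
    (I + Module.annihilator R M).radical = ((a ⊓ b) + Module.annihilator R M).radical := by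
  obtain ⟨-, hI, -, -, hb, -⟩ := h
  exact stmt1_general hI (le_modColon_iff_smul_le.mp hb.ge)
end
end

section
/- Let a and b be ideals of R linked by the zero ideal over M, i.e., bM = 0 :_M a and aM = 0 :_M b, with aM ≠ M ≠ bM. Then √(Ann_R(M) :_R a) = √(Ann_R(aM)) = √(b + Ann_R M). -/
universe u

open RingTheory.Sequence CategoryTheory

noncomputable section

variable {R : Type u} [CommRing R] [IsNoetherianRing R]
variable {M : Type u} [AddCommGroup M] [Module R M] [Module.Finite R M] [Nontrivial M]

/-! Since `(N :_E a) :_A E = (N :_A E) :_A a = N :_A aE`, an equality `N :_E a = bE` identifies all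
these ideals with `bE :_A E = Ann (E / bE)`. As `Supp (E / bE) = Supp E ∩ V(b)` for finite `E`, this
annihilator has the same radical as `b + Ann E`. Linkage by the zero ideal is the case `N = 0`. -/

theorem colon_ideal_smul {A E : Type*} [CommSemiring A] [AddCommMonoid E] [Module A E]
    (N P : Submodule A E) (I : Ideal A) :
    N.colon (I • P : Submodule A E) = (N.colon (P : Set E)).colon (I : Set A) := by
  ext r
  calc r ∈ N.colon (I • P : Submodule A E)
      ↔ I • P ≤ N.comap (LinearMap.lsmul A E r) := Submodule.mem_colon
    _ ↔ ∀ s ∈ I, ∀ x ∈ P, r • s • x ∈ N := Submodule.smul_le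
    _ ↔ r ∈ (N.colon (P : Set E)).colon (I : Set A) := by
      simp only [Submodule.mem_colon, SetLike.mem_coe, smul_eq_mul, mul_smul]

section ModColon

variable {A : Type u} [CommRing A] {E : Type u} [AddCommGroup E] [Module A E]

theorem mem_modColon {N : Submodule A E} {a : Ideal A} {m : E} :
    m ∈ N.modColon a ↔ ∀ r ∈ a, r • m ∈ N := by
  simp [Submodule.modColon]

theorem modColon_colon (N : Submodule A E) (a : Ideal A) (S : Set E) :
    (N.modColon a).colon S = (N.colon S).colon (a : Set A) := by
  ext r
  simp only [Submodule.mem_colon, mem_modColon, SetLike.mem_coe, smul_eq_mul, mul_smul,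
    smul_comm r]
  exact forall₂_comm

end ModColon

theorem radical_smul_top_colon {A E : Type*} [CommRing A] [AddCommGroup E] [Module A E]
    [Module.Finite A E] (I : Ideal A) :
    ((I • (⊤ : Submodule A E)).colon Set.univ).radical =
      (I ⊔ Module.annihilator A E).radical := by
  rw [← Submodule.annihilator_quotient, ← PrimeSpectrum.zeroLocus_eq_iff,
    ← Module.support_eq_zeroLocus, Module.support_quotient, Module.support_eq_zeroLocus,
    PrimeSpectrum.zeroLocus_sup, Set.inter_comm]

theorem stmt2_general {A E : Type u} [CommRing A] [AddCommGroup E] [Module A E]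
    [Module.Finite A E] (N : Submodule A E) (a b : Ideal A)
    (h : N.modColon a = b • (⊤ : Submodule A E)) :
    ((N.colon (⊤ : Submodule A E)).colon a).radical =
        (N.colon (a • (⊤ : Submodule A E) : Submodule A E)).radical ∧
      (N.colon (a • (⊤ : Submodule A E) : Submodule A E)).radical =
        (b + Module.annihilator A E).radical := by
  rw [colon_ideal_smul, ← modColon_colon, h]
  exact ⟨rfl, radical_smul_top_colon b⟩

theorem stmt2 (a b : Ideal R) (h : Ideal.IsLinkedBy M ⊥ a b) :
    ((Module.annihilator R M).colon a).radical =
        ((a • (⊤ : Submodule R M)).annihilator).radical ∧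
      ((a • (⊤ : Submodule R M)).annihilator).radical =
        (b + Module.annihilator R M).radical := by
  obtain ⟨-, -, -, -, hb, -⟩ := h
  simpa only [Submodule.bot_colon, Submodule.annihilator_top] using
    stmt2_general ⊥ a b (by rwa [Submodule.bot_smul] at hb)
end
end

section
/- Let a and b be ideals linked by I over M, where I is generated by an M-regular sequence of length t = grade_M(I). Then cd(a + b, M) ≤ max{cd(a, M), cd(b, M), t + 1}, where cd(c, M) := sup{i : H^i_c(M) ≠ 0} is the cohomological dimension. -/
universe u

open RingTheory.Sequence CategoryTheory

noncomputable section

variable {R : Type u} [CommRing R] [IsNoetherianRing R]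
variable {M : Type u} [AddCommGroup M] [Module R M] [Module.Finite R M] [Nontrivial M]

/-!
Mayer–Vietoris bounds `cd(a + b, M)` by the maximum of `cd(a, M)`, `cd(b, M)` and
`cd(a ∩ b, M) + 1`, so it suffices that `cd(a ∩ b, M) ≤ t`. Linkage gives `(a ∩ b)² M ⊆ I M`: an
element of `(a ∩ b) M ⊆ b M = I M :_M a` is sent into `I M` by `a`. Hence `M / I M` is
`(a ∩ b)`-power torsion and has no higher local cohomology, and undoing the quotient by one
regular element of `a ∩ b` raises the cohomological dimension by at most one.

Local cohomology is computed as the colimit of `Extⁱ(A ⧸ aⁿ, -)`, so that every vanishing statement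
says that each class pulls back to zero along some `A ⧸ aᵐ → A ⧸ aⁿ`.
-/

section ExtPullback

variable {C : Type*} [Category* C] [Abelian C] [HasExt C] {X X' X'' Y Z : C} {i j k : ℕ}

/-- The pullback `f^* : Extⁱ(X, Y) → Extⁱ(X', Y)` of extension classes along `f : X' ⟶ X`, that is,
functoriality of `Ext` in its first variable. -/
def extPullback (f : X' ⟶ X) : Abelian.Ext X Y i →+ Abelian.Ext X' Y i :=
  (Abelian.Ext.mk₀ f).precomp Y (zero_add i)

lemma extPullback_apply (f : X' ⟶ X) (ξ : Abelian.Ext X Y i) :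
    extPullback f ξ = (Abelian.Ext.mk₀ f).comp ξ (zero_add i) := rfl

lemma extPullback_sub (f g : X' ⟶ X) (ξ : Abelian.Ext X Y i) :
    extPullback (f - g) ξ = extPullback f ξ - extPullback g ξ := by
  rw [eq_sub_iff_add_eq, extPullback_apply, extPullback_apply, extPullback_apply,
    ← Abelian.Ext.add_comp, ← Abelian.Ext.mk₀_add, sub_add_cancel]

lemma extPullback_comp (f : X'' ⟶ X') (g : X' ⟶ X) (ξ : Abelian.Ext X Y i) :
    extPullback (f ≫ g) ξ = extPullback f (extPullback g ξ) :=
  (Abelian.Ext.mk₀_comp_mk₀_assoc f g ξ).symm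

lemma extPullback_comp_eq_zero (f : X'' ⟶ X') {g : X' ⟶ X} {ξ : Abelian.Ext X Y i}
    (h : extPullback g ξ = 0) : extPullback (f ≫ g) ξ = 0 := by
  rw [extPullback_comp, h, map_zero]

lemma extPullback_smul {A : Type*} [Ring A] [Linear A C] (f : X' ⟶ X) (r : A)
    (ξ : Abelian.Ext X Y i) : extPullback f (r • ξ) = r • extPullback f ξ :=
  Abelian.Ext.comp_smul _ _ (zero_add i) r

lemma smul_ext_eq_zero_of_smul_id_eq_zero {A : Type*} [Ring A] [Linear A C] {r : A}
    (h : r • 𝟙 X = 0) (ξ : Abelian.Ext X Y i) : r • ξ = 0 := by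
  rw [← ξ.mk₀_id_comp, ← Abelian.Ext.smul_comp, ← Abelian.Ext.mk₀_smul, h, Abelian.Ext.mk₀_zero,
    Abelian.Ext.zero_comp]

lemma extPullback_comp_right (f : X' ⟶ X) (ξ : Abelian.Ext X Y i) (η : Abelian.Ext Y Z j)
    (h : i + j = k) : extPullback f (ξ.comp η h) = (extPullback f ξ).comp η h :=
  (Abelian.Ext.comp_assoc (Abelian.Ext.mk₀ f) ξ η (zero_add i) h (by lia)).symm

lemma extPullback_extClass_comp {S S' : ShortComplex C} (hS : S.ShortExact) (hS' : S'.ShortExact)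
    (τ : S' ⟶ S) (η : Abelian.Ext S.X₁ Y i) (h : 1 + i = k) :
    extPullback τ.τ₃ (hS.extClass.comp η h) = hS'.extClass.comp (extPullback τ.τ₁ η) h := by
  rw [extPullback_comp_right, extPullback_apply, ← hS'.extClass_naturality hS τ]
  exact Abelian.Ext.comp_assoc _ _ _ (add_zero 1) (zero_add i) (by lia)

lemma exists_extPullback_eq_zero_imp {S : ShortComplex C} (hS : S.ShortExact)
    {ξ : Abelian.Ext S.X₃ Y (i + 1)} (hξ : extPullback S.g ξ = 0) :
    ∃ η : Abelian.Ext S.X₁ Y i, ∀ {S' : ShortComplex C}, S'.ShortExact → ∀ τ : S' ⟶ S,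
      extPullback τ.τ₁ η = 0 → extPullback τ.τ₃ ξ = 0 := by
  obtain ⟨η, rfl⟩ := Abelian.Ext.contravariant_sequence_exact₃ hS Y ξ hξ (Nat.add_comm 1 i)
  refine ⟨η, fun hS' τ hη ↦ ?_⟩
  rw [extPullback_extClass_comp hS hS', hη, Abelian.Ext.comp_zero]

lemma exists_extPullback_eq_zero_imp_of_comp_eq_zero {S : ShortComplex C} (hS : S.ShortExact)
    {ξ : Abelian.Ext X S.X₁ (i + 1)} (hξ : ξ.comp (Abelian.Ext.mk₀ S.f) (add_zero (i + 1)) = 0) :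
    ∃ ζ : Abelian.Ext X S.X₃ i, ∀ {X' : C} (f : X' ⟶ X),
      extPullback f ζ = 0 → extPullback f ξ = 0 := by
  obtain ⟨ζ, rfl⟩ := Abelian.Ext.covariant_sequence_exact₁ X hS ξ hξ rfl
  refine ⟨ζ, fun f hf ↦ ?_⟩
  rw [extPullback_comp_right, hf, Abelian.Ext.zero_comp]

end ExtPullback

section DerivedFunctorExt

open Limits Opposite

variable {A : Type*} [CommRing A] {C : Type*} [Category* C] [Abelian C] {X X' : C} [Linear A C]

/-- The map of Hom complexes `Hom(Q, Y) ⟶ Hom(P, Y)` induced by a chain map `φ : P ⟶ Q`. -/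
def linearYonedaMap {P Q : ChainComplex C ℕ} (φ : P ⟶ Q) (Y : C) :
    Q.linearYonedaObj A Y ⟶ P.linearYonedaObj A Y :=
  (HomologicalComplex.unopFunctor _ _).map
    ((((linearYoneda A C).obj Y).rightOp.mapHomologicalComplex _).map φ).op

lemma homologyπ_surjective {ι : Type*} {c : ComplexShape ι} (K : HomologicalComplex (ModuleCat A) c)
    (n : ι) : Function.Surjective (K.homologyπ n) :=
  (ModuleCat.epi_iff_surjective _).1 inferInstance

lemma d_comp_iCycles_apply (P : ChainComplex C ℕ) (Y : C) (n : ℕ)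
    (z : (P.linearYonedaObj A Y).cycles n) :
    P.d (n + 1) n ≫ (P.linearYonedaObj A Y).iCycles n z = 0 :=
  congr($((P.linearYonedaObj A Y).iCycles_d n (n + 1)) z)

section

variable [HasExt C]

/-- The class in `Extⁿ(X, Y)` of a cocycle of the complex `Hom(P, Y)`, for a projective resolution
`P` of `X`. -/
def cocycleExt (P : ProjectiveResolution X) (Y : C) (n : ℕ) :
    (P.complex.linearYonedaObj A Y).cycles n →+ Abelian.Ext X Y n :=
  AddMonoidHom.mk'
    (fun z ↦ P.extMk ((P.complex.linearYonedaObj A Y).iCycles n z) _ rfl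
      (d_comp_iCycles_apply P.complex Y n z))
    fun z w ↦ Eq.trans (by congr 1; exact map_add _ z w) (P.add_extMk _ _ _ rfl
      (d_comp_iCycles_apply P.complex Y n z) (d_comp_iCycles_apply P.complex Y n w)).symm

lemma cocycleExt_surjective (P : ProjectiveResolution X) (Y : C) (n : ℕ) :
    Function.Surjective (cocycleExt (A := A) P Y n) := by
  intro ξ
  let K := P.complex.linearYonedaObj A Y
  obtain ⟨f, d_comp, rfl⟩ := P.extMk_surjective ξ (n + 1) rfl
  have exact_cycles := (ShortComplex.moduleCat_exact_iff _).1
    (ShortComplex.exact_of_f_is_kernel (.mk _ _ (K.iCycles_d n (n + 1)))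
      (K.cyclesIsKernel n (n + 1) (by simp)))
  obtain ⟨z, rfl⟩ := exact_cycles f d_comp
  exact ⟨z, rfl⟩

lemma ker_cocycleExt (P : ProjectiveResolution X) (Y : C) (n : ℕ) :
    (cocycleExt P Y (n + 1)).ker =
      ((P.complex.linearYonedaObj A Y).homologyπ (n + 1)).hom.toAddMonoidHom.ker := by
  let K := P.complex.linearYonedaObj A Y
  have exact_homology := (ShortComplex.ShortExact.moduleCat_exact_iff_function_exact _).1
    (ShortComplex.exact_of_g_is_cokernel (.mk _ _ (K.toCycles_comp_homologyπ n (n + 1)))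
      (K.homologyIsCokernel n (n + 1) (by simp)))
  have iCycles_injective : Function.Injective (K.iCycles (n + 1)) :=
    (ModuleCat.mono_iff_injective _).1 inferInstance
  ext z
  refine (P.extMk_eq_zero_iff _ _ rfl (d_comp_iCycles_apply P.complex Y _ z) n rfl).trans
    (Iff.trans ?_ (exact_homology z).symm)
  refine exists_congr fun y ↦ Iff.trans ?_ iCycles_injective.eq_iff
  exact Eq.congr_left congr($(K.toCycles_i n (n + 1)) y).symm

/-- In positive degrees, the cohomology of `Hom(P, Y)` computes `Ext(X, Y)`, for a projective
resolution `P` of `X`. -/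
def homologyAddEquivExt (P : ProjectiveResolution X) (Y : C) (n : ℕ) :
    (P.complex.linearYonedaObj A Y).homology (n + 1) ≃+ Abelian.Ext X Y (n + 1) :=
  (QuotientAddGroup.liftEquiv _ (homologyπ_surjective _ (n + 1)) (ker_cocycleExt P Y n)).symm.trans
    (QuotientAddGroup.liftEquiv _ (cocycleExt_surjective P Y (n + 1)) rfl)

lemma homologyAddEquivExt_homologyπ (P : ProjectiveResolution X) (Y : C) (n : ℕ)
    (z : (P.complex.linearYonedaObj A Y).cycles (n + 1)) :
    homologyAddEquivExt P Y n ((P.complex.linearYonedaObj A Y).homologyπ (n + 1) z) =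
      cocycleExt P Y (n + 1) z :=
  congrArg (QuotientAddGroup.liftEquiv _ (cocycleExt_surjective P Y (n + 1)) rfl)
    ((QuotientAddGroup.liftEquiv _ (homologyπ_surjective _ (n + 1))
      (ker_cocycleExt (A := A) P Y n)).symm_apply_apply (QuotientAddGroup.mk z))

lemma extPullback_cocycleExt {P : ProjectiveResolution X} {P' : ProjectiveResolution X'}
    {g : X' ⟶ X} (φ : ProjectiveResolution.Hom P' P g) (Y : C) (n : ℕ)
    (z : (P.complex.linearYonedaObj A Y).cycles n) :
    extPullback g (cocycleExt P Y n z) =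
      cocycleExt P' Y n (HomologicalComplex.cyclesMap (linearYonedaMap φ.hom Y) n z) := by
  refine (P.mk₀_comp_extMk _ _ rfl (d_comp_iCycles_apply P.complex Y n z) φ).trans ?_
  simp only [cocycleExt, AddMonoidHom.mk'_apply]
  congr 1
  exact congr($(HomologicalComplex.cyclesMap_i (linearYonedaMap φ.hom Y) n) z).symm

lemma extPullback_homologyAddEquivExt {P : ProjectiveResolution X} {P' : ProjectiveResolution X'}
    {g : X' ⟶ X} (φ : ProjectiveResolution.Hom P' P g) (Y : C) (n : ℕ)
    (x : (P.complex.linearYonedaObj A Y).homology (n + 1)) :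
    extPullback g (homologyAddEquivExt P Y n x) = homologyAddEquivExt P' Y n
      (HomologicalComplex.homologyMap (linearYonedaMap φ.hom Y) (n + 1) x) := by
  obtain ⟨z, rfl⟩ := homologyπ_surjective _ _ x
  rw [homologyAddEquivExt_homologyπ, extPullback_cocycleExt φ, ← homologyAddEquivExt_homologyπ,
    ← ConcreteCategory.comp_apply, ← ConcreteCategory.comp_apply,
      HomologicalComplex.homologyπ_naturality]

end

variable [EnoughProjectives C]

lemma ext_map_app_comp_isoExt_hom {P : ProjectiveResolution X} {P' : ProjectiveResolution X'}
    {g : X' ⟶ X} (φ : ProjectiveResolution.Hom P' P g) (Y : C) (n : ℕ) :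
    ((_root_.Ext A C n).map g.op).app Y ≫ (P'.isoExt n Y).hom =
      (P.isoExt n Y).hom ≫ HomologicalComplex.homologyMap (linearYonedaMap φ.hom Y) n := by
  have derived : CommSq _ _ _ _ := ⟨ProjectiveResolution.isoLeftDerivedObj_inv_naturality g P' P
    φ.hom (by simpa using! φ.hom_f_zero_comp_π_f_zero) ((linearYoneda A C).obj Y).rightOp n⟩
  have homology : CommSq _ _ _ _ :=
    ⟨HomologicalComplex.homologyOp_hom_naturality (linearYonedaMap (A := A) φ.hom Y) n⟩
  exact (derived.unop.flip.vert_comp homology.vert_inv.unop).w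

variable [HasExt C]

/-- In positive degrees, `Ext` as a derived functor agrees with `Ext` as groups of morphisms in the
derived category. -/
def derivedExtAddEquiv (A : Type*) [CommRing A] [Linear A C] (X Y : C) (n : ℕ) :
    ((_root_.Ext A C (n + 1)).obj (op X)).obj Y ≃+ Abelian.Ext X Y (n + 1) :=
  ((projectiveResolution X).isoExt (n + 1) Y).toLinearEquiv.toAddEquiv.trans
    (homologyAddEquivExt (projectiveResolution X) Y n)

lemma extPullback_derivedExtAddEquiv (g : X' ⟶ X) (Y : C) (n : ℕ)
    (ξ : ((_root_.Ext A C (n + 1)).obj (op X)).obj Y) :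
    extPullback g (derivedExtAddEquiv A X Y n ξ) =
      derivedExtAddEquiv A X' Y n (((_root_.Ext A C (n + 1)).map g.op).app Y ξ) := by
  let φ : ProjectiveResolution.Hom (projectiveResolution X') (projectiveResolution X) g :=
    { hom := ProjectiveResolution.lift g _ _
      hom_f_zero_comp_π_f_zero := congr($(ProjectiveResolution.lift_commutes g
        (projectiveResolution X') (projectiveResolution X)).f 0) }
  refine (extPullback_homologyAddEquivExt φ Y n _).trans (congrArg _ ?_)
  exact congr($(ext_map_app_comp_isoExt_hom φ Y (n + 1)) ξ).symm

end DerivedFunctorExt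

section LocalCohomology

open Limits Opposite

lemma subsingleton_colimit_iff {A : Type*} [Ring A] {J : Type*} [Category* J]
    [IsFiltered J] (F : J ⥤ ModuleCat.{u} A) [HasColimit F] [PreservesColimit F (forget _)] :
    Subsingleton ↥(colimit F) ↔ ∀ j (x : F.obj j), ∃ (k : J) (f : j ⟶ k), F.map f x = 0 := by
  constructor
  · intro _ j x
    have ι_x_eq_zero : colimit.ι F j x = colimit.ι F j 0 := Subsingleton.elim _ _
    obtain ⟨k, f, g, hfg⟩ := Concrete.colimit_exists_of_rep_eq F x 0 ι_x_eq_zero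
    exact ⟨k, f, hfg.trans (map_zero _)⟩
  · intro eventually_zero
    refine subsingleton_of_forall_eq 0 fun y ↦ ?_
    obtain ⟨j, x, rfl⟩ := Concrete.colimit_exists_rep F y
    obtain ⟨k, f, hfx⟩ := eventually_zero j x
    rw [← colimit.w_apply F f, hfx, map_zero]

variable {A : Type u} [CommRing A] {a I J K : Ideal A} {N : ModuleCat.{u} A} {i : ℕ}

/-- The quotient map `A ⧸ I ⟶ A ⧸ J` for `I ≤ J`. -/
def quotientMap (h : I ≤ J) : ModuleCat.of A (A ⧸ I) ⟶ ModuleCat.of A (A ⧸ J) :=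
  ModuleCat.ofHom (Submodule.factor h)

lemma quotientMap_comp (hIJ : I ≤ J) (hJK : J ≤ K) :
    quotientMap hIJ ≫ quotientMap hJK = quotientMap (hIJ.trans hJK) := by
  ext; rfl

lemma extPullback_quotientMap_quotientMap (hIJ : I ≤ J) (hJK : J ≤ K)
    (ξ : Abelian.Ext (ModuleCat.of A (A ⧸ K)) N i) :
    extPullback (quotientMap hIJ) (extPullback (quotientMap hJK) ξ) =
      extPullback (quotientMap (hIJ.trans hJK)) ξ := by
  rw [← extPullback_comp, quotientMap_comp]

lemma extPullback_quotientMap_eq_zero_of_le (hIJ : I ≤ J) {hJK : J ≤ K}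
    {ξ : Abelian.Ext (ModuleCat.of A (A ⧸ K)) N i} (hξ : extPullback (quotientMap hJK) ξ = 0) :
    extPullback (quotientMap (hIJ.trans hJK)) ξ = 0 := by
  rw [← extPullback_quotientMap_quotientMap hIJ hJK, hξ, map_zero]

/-- The colimit of the groups `Extⁱ(A ⧸ aⁿ, N)` over `n` vanishes. -/
def ExtColimitVanishes (a : Ideal A) (i : ℕ) (N : ModuleCat.{u} A) : Prop :=
  ∀ (n : ℕ) (ξ : Abelian.Ext (ModuleCat.of A (A ⧸ a ^ n)) N i), ∃ (m : ℕ) (h : n ≤ m),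
    extPullback (quotientMap (Ideal.pow_le_pow_right (I := a) h)) ξ = 0

lemma subsingleton_localCohomology_iff :
    Subsingleton ((localCohomology a (i + 1)).obj N) ↔ ExtColimitVanishes a (i + 1) N := by
  let D := localCohomology.diagram (localCohomology.idealPowersDiagram a) (i + 1)
  let F : ℕᵒᵖᵒᵖ ⥤ ModuleCat.{u} A := D ⋙ (evaluation _ _).obj N
  have : PreservesFilteredColimitsOfSize.{0, 0} (forget (ModuleCat.{u} A)) :=
    preservesFilteredColimitsOfSize_shrink.{0, u, 0, u} _
  have : Subsingleton ((localCohomology a (i + 1)).obj N) ↔ Subsingleton ↥(colimit F) :=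
    (colimitObjIsoColimitCompEvaluation D N).toLinearEquiv.toEquiv.subsingleton_congr
  rw [this, subsingleton_colimit_iff]
  let e (n : ℕ) : F.obj (op (op n)) ≃+ Abelian.Ext (ModuleCat.of A (A ⧸ a ^ n)) N (i + 1) :=
    derivedExtAddEquiv A (ModuleCat.of A (A ⧸ a ^ n)) N i
  have pullback_eq_zero_iff {n m : ℕ} (h : n ≤ m) (x : F.obj (op (op n))) :
      extPullback (quotientMap (Ideal.pow_le_pow_right (I := a) h)) (e n x) = 0 ↔
        F.map (homOfLE h).op.op x = 0 := by
    rw [← (e m).map_eq_zero_iff]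
    exact Eq.congr_left (extPullback_derivedExtAddEquiv (quotientMap _) N i x)
  constructor
  · intro eventually_zero n ξ
    obtain ⟨x, rfl⟩ := (e n).surjective ξ
    obtain ⟨k, f, hfx⟩ := eventually_zero (op (op n)) x
    exact ⟨k.unop.unop, leOfHom f.unop.unop, (pullback_eq_zero_iff _ x).2 hfx⟩
  · intro eventually_zero j x
    obtain ⟨m, h, hm⟩ := eventually_zero j.unop.unop (e _ x)
    exact ⟨op (op m), (homOfLE h).op.op, (pullback_eq_zero_iff h x).1 hm⟩

lemma cohDim_le_iff {a : Ideal A} {N : Type u} [AddCommGroup N] [Module A N] {d : ℕ∞} :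
    cohDim a N ≤ d ↔
      ∀ i : ℕ, d < (i + 1 : ℕ) → ExtColimitVanishes a (i + 1) (ModuleCat.of A N) := by
  simp only [cohDim, sSup_le_iff, ← subsingleton_localCohomology_iff,
    ← not_nontrivial_iff_subsingleton]
  constructor
  · intro h i hi hnontrivial
    exact hi.not_ge (h _ ⟨i + 1, rfl, hnontrivial⟩)
  · rintro h _ ⟨i, rfl, hi⟩
    cases i with
    | zero => exact zero_le
    | succ i => exact not_lt.1 fun hlt ↦ h i hlt hi

end LocalCohomology

section Torsion

variable {A : Type u} [CommRing A] {N : ModuleCat.{u} A} {i : ℕ}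

lemma extPullback_eq_zero_of_range_le {X : Type u} [AddCommGroup X] [Module A X]
    {P : Submodule A X} {ξ : Abelian.Ext (ModuleCat.of A X) N i}
    (hξ : extPullback (ModuleCat.ofHom P.subtype) ξ = 0) {X' : ModuleCat.{u} A}
    (f : X' ⟶ ModuleCat.of A X) (hf : LinearMap.range f.hom ≤ P) : extPullback f ξ = 0 := by
  let g : X' ⟶ ModuleCat.of A P := ModuleCat.ofHom (f.hom.codRestrict P fun x ↦ hf ⟨x, rfl⟩)
  have factorization : f = g ≫ ModuleCat.ofHom P.subtype := by ext; rfl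
  rw [factorization]
  exact extPullback_comp_eq_zero g hξ

lemma smul_top_comap_subtype {P : Type*} [AddCommGroup P] [Module A P] (I : Ideal A)
    (K : Submodule A P) : (I • K).comap K.subtype = I • (⊤ : Submodule A K) := by
  rw [← Submodule.map_injective_of_injective K.injective_subtype |>.eq_iff,
    Submodule.map_smul'', Submodule.map_top, Submodule.range_subtype,
    Submodule.map_comap_subtype, inf_eq_right]
  exact Submodule.smul_le_right

lemma exists_comap_subtype_pow_smul_top_le [IsNoetherianRing A] {P : Type*} [AddCommGroup P]
    [Module A P] [Module.Finite A P] (c : Ideal A) (K : Submodule A P) :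
    ∃ k, ∀ m, (c ^ (k + m) • (⊤ : Submodule A P)).comap K.subtype ≤ c ^ m • ⊤ := by
  obtain ⟨k, hk⟩ := Ideal.exists_pow_inf_eq_pow_smul c K
  refine ⟨k, fun m x hx ↦ ?_⟩
  have x_mem_inf : (x : P) ∈ c ^ (k + m) • ⊤ ⊓ K := ⟨hx, x.2⟩
  rw [hk _ (Nat.le_add_right k m), Nat.add_sub_cancel_left] at x_mem_inf
  rw [← smul_top_comap_subtype]
  exact Submodule.smul_mono le_rfl inf_le_right x_mem_inf

/-- The restriction `I P → I X` of a linear map `π : P → X`. -/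
def smulTopRestrict {P X : Type u} [AddCommGroup P] [Module A P] [AddCommGroup X] [Module A X]
    (I : Ideal A) (π : P →ₗ[A] X) : ↥(I • (⊤ : Submodule A P)) →ₗ[A] ↥(I • (⊤ : Submodule A X)) :=
  π.restrict (Submodule.smul_top_le_comap_smul_top I π)

section

variable {P X : Type u} [AddCommGroup P] [Module A P] [AddCommGroup X] [Module A X]

lemma smulTopRestrict_surjective (I : Ideal A) {π : P →ₗ[A] X} (hπ : Function.Surjective π) :
    Function.Surjective (smulTopRestrict I π) := by
  rintro ⟨x, hx⟩
  rw [← LinearMap.range_eq_top.2 hπ, ← Submodule.map_top, ← Submodule.map_smul''] at hx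
  obtain ⟨y, hy, rfl⟩ := hx
  exact ⟨⟨y, hy⟩, rfl⟩

/-- The inclusion of `0 → I P ∩ K → I P → I X → 0` into `0 → K → P → X → 0`. -/
def smulTopShortComplexInclusion (I : Ideal A) (π : P →ₗ[A] X) :
    (smulTopRestrict I π).shortComplexKer ⟶ π.shortComplexKer where
  τ₁ := ModuleCat.ofHom (((Submodule.subtype _).comp (Submodule.subtype _)).codRestrict _
    fun x ↦ congrArg Subtype.val x.2)
  τ₂ := ModuleCat.ofHom (Submodule.subtype _)
  τ₃ := ModuleCat.ofHom (Submodule.subtype _)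

end

lemma exists_extPullback_pow_smul_top_eq_zero [IsNoetherianRing A] {c : Ideal A} {k : ℕ}
    (hN : Module.IsTorsionBySet A N ↑(c ^ k)) (X : Type u) [AddCommGroup X] [Module A X]
    [Module.Finite A X] (ξ : Abelian.Ext (ModuleCat.of A X) N i) :
    ∃ m : ℕ, extPullback (ModuleCat.ofHom (c ^ m • (⊤ : Submodule A X)).subtype) ξ = 0 := by
  induction i generalizing X with
  | zero =>
    obtain ⟨f, rfl⟩ := (Abelian.Ext.mk₀_bijective (ModuleCat.of A X) N).2 ξ
    have f_eq_zero : c ^ k • (⊤ : Submodule A X) ≤ LinearMap.ker f.hom :=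
      Submodule.smul_le.2 fun r hr x _ ↦ by
        rw [LinearMap.mem_ker, map_smul]
        exact hN (a := ⟨r, hr⟩)
    refine ⟨k, ?_⟩
    rw [extPullback_apply, Abelian.Ext.mk₀_comp_mk₀, Abelian.Ext.mk₀_eq_zero_iff]
    ext x
    exact f_eq_zero x.2
  | succ i ih =>
    obtain ⟨n, π, hπ⟩ := Module.Finite.exists_fin' A X
    obtain ⟨P, _, _, _, _, π, hπ⟩ : ∃ (P : Type u) (_ : AddCommGroup P) (_ : Module A P)
        (_ : Module.Finite A P) (_ : Module.Projective A P) (π : P →ₗ[A] X),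
        Function.Surjective π :=
      ⟨Fin n → A, inferInstance, inferInstance, inferInstance, inferInstance, π, hπ⟩
    obtain ⟨η, hη⟩ := exists_extPullback_eq_zero_imp (LinearMap.shortExact_shortComplexKer hπ)
      (ξ := ξ) (Abelian.Ext.eq_zero_of_projective _)
    obtain ⟨m, hm⟩ := ih (LinearMap.ker π) η
    obtain ⟨l, hl⟩ := exists_comap_subtype_pow_smul_top_le c (LinearMap.ker π)
    refine ⟨l + m, hη (LinearMap.shortExact_shortComplexKer (smulTopRestrict_surjective _ hπ))
      (smulTopShortComplexInclusion _ π) ?_⟩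
    refine extPullback_eq_zero_of_range_le hm (smulTopShortComplexInclusion _ π).τ₁ ?_
    rintro _ ⟨x, rfl⟩
    exact hl m x.1.2

/-- The morphism from `0 → J → A → A ⧸ J → 0` to `0 → I → A → A ⧸ I → 0` for `J ≤ I`. -/
def idealShortComplexMap {I J : Ideal A} (h : J ≤ I) :
    (Submodule.mkQ J).shortComplexKer ⟶ (Submodule.mkQ I).shortComplexKer where
  τ₁ := ModuleCat.ofHom (Submodule.inclusion (by simpa only [Submodule.ker_mkQ] using h))
  τ₂ := 𝟙 _
  τ₃ := quotientMap h

lemma extColimitVanishes_of_isTorsionBySet [IsNoetherianRing A] {c : Ideal A} {k : ℕ}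
    (hN : Module.IsTorsionBySet A N ↑(c ^ k)) : ExtColimitVanishes c (i + 1) N := by
  intro n ξ
  obtain ⟨η, hη⟩ := exists_extPullback_eq_zero_imp
    (LinearMap.shortExact_shortComplexKer (Submodule.mkQ_surjective (c ^ n))) (ξ := ξ)
    (Abelian.Ext.eq_zero_of_projective _)
  obtain ⟨m, hm⟩ := exists_extPullback_pow_smul_top_eq_zero hN _ η
  refine ⟨m + n, Nat.le_add_left n m,
    hη (LinearMap.shortExact_shortComplexKer (Submodule.mkQ_surjective _))
      (idealShortComplexMap _) (extPullback_eq_zero_of_range_le hm _ ?_)⟩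
  rintro _ ⟨x, rfl⟩
  have x_mem : x.1 ∈ c ^ m • LinearMap.ker (Submodule.mkQ (c ^ n)) := by
    rw [Submodule.ker_mkQ, smul_eq_mul, ← pow_add]
    exact (Submodule.ker_mkQ (c ^ (m + n))).le x.2
  rwa [← smul_top_comap_subtype]

end Torsion

section RegularSequence

open scoped Pointwise

variable {A : Type u} [CommRing A] {c : Ideal A} {x : A} {N : ModuleCat.{u} A} {i : ℕ}

lemma exists_extPullback_eq_zero_imp_of_smul_eq_zero (hx : IsSMulRegular N x) {X : ModuleCat.{u} A}
    {ξ : Abelian.Ext X N (i + 1)} (hξ : x • ξ = 0) :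
    ∃ ζ : Abelian.Ext X (ModuleCat.of A (QuotSMulTop x N)) i, ∀ {X' : ModuleCat.{u} A}
      (f : X' ⟶ X), extPullback f ζ = 0 → extPullback f ξ = 0 := by
  have comp_smul_id : ξ.comp (Abelian.Ext.mk₀ (x • 𝟙 N)) (add_zero (i + 1)) = 0 := by
    rw [Abelian.Ext.mk₀_smul, Abelian.Ext.comp_smul, Abelian.Ext.comp_mk₀_id, hξ]
  rw [← ModuleCat.smulShortComplex_f_eq_smul_id] at comp_smul_id
  exact exists_extPullback_eq_zero_imp_of_comp_eq_zero hx.smulShortComplex_shortExact comp_smul_id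

lemma exists_extPullback_eq_zero_of_pow_smul_eq_zero (hx : IsSMulRegular N x)
    (hN : ExtColimitVanishes c i (ModuleCat.of A (QuotSMulTop x N))) (p : ℕ) {n : ℕ}
    {ξ : Abelian.Ext (ModuleCat.of A (A ⧸ c ^ n)) N (i + 1)} (hξ : x ^ p • ξ = 0) :
    ∃ (m : ℕ) (h : n ≤ m), extPullback (quotientMap (Ideal.pow_le_pow_right (I := c) h)) ξ = 0 := by
  induction p generalizing n with
  | zero => exact ⟨n, le_rfl, by rw [← one_smul A ξ, ← pow_zero x, hξ, map_zero]⟩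
  | succ p ih =>
    rw [pow_succ', mul_smul] at hξ
    obtain ⟨ζ, hζ⟩ := exists_extPullback_eq_zero_imp_of_smul_eq_zero hx hξ
    obtain ⟨m, hnm, hm⟩ := hN n ζ
    have pullback_killed := hζ _ hm
    rw [extPullback_smul] at pullback_killed
    obtain ⟨m', hmm', hm'⟩ := ih pullback_killed
    exact ⟨m', hnm.trans hmm', by rwa [extPullback_quotientMap_quotientMap] at hm'⟩

lemma ExtColimitVanishes.succ_of_isSMulRegular (hx : IsSMulRegular N x) (hxc : x ∈ c)
    (hN : ExtColimitVanishes c i (ModuleCat.of A (QuotSMulTop x N))) :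
    ExtColimitVanishes c (i + 1) N := by
  intro n ξ
  refine exists_extPullback_eq_zero_of_pow_smul_eq_zero hx hN n
    (smul_ext_eq_zero_of_smul_id_eq_zero ?_ ξ)
  ext
  exact (Submodule.Quotient.mk_eq_zero _).2 (by simpa using Ideal.pow_mem_pow hxc n)

lemma smul_top_quotSMulTop_le {M : Type*} [AddCommGroup M] [Module A M] {I : Ideal A} {rs : List A}
    (h : I • (⊤ : Submodule A M) ≤ Ideal.ofList (x :: rs) • ⊤) :
    I • (⊤ : Submodule A (QuotSMulTop x M)) ≤ Ideal.ofList rs • ⊤ := by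
  have map_mkQ_le := Submodule.map_mono (f := (x • (⊤ : Submodule A M)).mkQ) h
  rwa [Ideal.ofList_cons_smul, Submodule.map_sup, Submodule.mkQ_map_self, bot_sup_eq,
    Submodule.map_smul'', Submodule.map_smul'', Submodule.map_top, Submodule.range_mkQ]
    at map_mkQ_le

lemma extColimitVanishes_of_isWeaklyRegular [IsNoetherianRing A] {k : ℕ} {rs : List A}
    {M : Type u} [AddCommGroup M] [Module A M] (hreg : IsWeaklyRegular M rs)
    (hrs : ∀ r ∈ rs, r ∈ c) (hc : c ^ k • (⊤ : Submodule A M) ≤ Ideal.ofList rs • ⊤) :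
    ExtColimitVanishes c (rs.length + i + 1) (ModuleCat.of A M) := by
  induction rs generalizing M with
  | nil =>
    refine extColimitVanishes_of_isTorsionBySet (k := k) fun y r ↦ ?_
    simpa using hc (Submodule.smul_mem_smul r.2 Submodule.mem_top (n := y))
  | cons x rs ih =>
    rw [isWeaklyRegular_cons_iff] at hreg
    rw [List.forall_mem_cons] at hrs
    rw [List.length_cons, Nat.add_right_comm rs.length 1 i]
    exact .succ_of_isSMulRegular hreg.1 hrs.1 (ih hreg.2 hrs.2 (smul_top_quotSMulTop_le hc))

lemma cohDim_le_length [IsNoetherianRing A] {k : ℕ} {rs : List A}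
    {M : Type u} [AddCommGroup M] [Module A M] (hreg : IsWeaklyRegular M rs)
    (hrs : Ideal.ofList rs ≤ c) (hc : c ^ k • (⊤ : Submodule A M) ≤ Ideal.ofList rs • ⊤) :
    cohDim c M ≤ rs.length := by
  refine cohDim_le_iff.2 fun i hi ↦ ?_
  obtain ⟨j, rfl⟩ := Nat.exists_eq_add_of_le (Nat.lt_succ_iff.1 (Nat.cast_lt.1 hi))
  exact extColimitVanishes_of_isWeaklyRegular hreg (fun r hr ↦ hrs (Ideal.subset_span hr)) hc

end RegularSequence

section MayerVietoris

open Filter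

variable {A : Type u} [CommRing A] {a b I J : Ideal A} {N : ModuleCat.{u} A} {i : ℕ}

/-- The map `A ⧸ I × A ⧸ J ⟶ A ⧸ (I ⊔ J)` sending `(x, y)` to the difference of the images of `x`
and `y`; it is the second map of the Mayer–Vietoris sequence. -/
def mayerVietorisDiff (I J : Ideal A) :
    ModuleCat.of A ((A ⧸ I) × (A ⧸ J)) ⟶ ModuleCat.of A (A ⧸ (I ⊔ J)) :=
  ModuleCat.ofHom (LinearMap.fst A _ _) ≫ quotientMap le_sup_left -
    ModuleCat.ofHom (LinearMap.snd A _ _) ≫ quotientMap le_sup_right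

lemma mayerVietorisDiff_mk (r s : A) :
    mayerVietorisDiff I J (Submodule.Quotient.mk r, Submodule.Quotient.mk s) =
      (Submodule.Quotient.mk (r - s) : A ⧸ (I ⊔ J)) := rfl

lemma extPullback_mayerVietorisDiff_eq_zero
    {ξ : Abelian.Ext (ModuleCat.of A (A ⧸ (I ⊔ J))) N i}
    (hI : extPullback (quotientMap le_sup_left) ξ = 0)
    (hJ : extPullback (quotientMap le_sup_right) ξ = 0) :
    extPullback (mayerVietorisDiff I J) ξ = 0 := by
  rw [mayerVietorisDiff, extPullback_sub, extPullback_comp_eq_zero _ hI,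
    extPullback_comp_eq_zero _ hJ, sub_zero]

/-- The Mayer–Vietoris sequence `0 → A ⧸ (I ⊓ J) → A ⧸ I × A ⧸ J → A ⧸ (I ⊔ J) → 0`. -/
abbrev mayerVietoris (I J : Ideal A) : ShortComplex (ModuleCat.{u} A) where
  X₁ := ModuleCat.of A (A ⧸ (I ⊓ J))
  X₂ := ModuleCat.of A ((A ⧸ I) × (A ⧸ J))
  X₃ := ModuleCat.of A (A ⧸ (I ⊔ J))
  f := ModuleCat.ofHom ((Submodule.factor inf_le_left).prod (Submodule.factor inf_le_right))
  g := mayerVietorisDiff I J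
  zero := by
    refine ModuleCat.hom_ext (LinearMap.ext fun x ↦ ?_)
    obtain ⟨r, rfl⟩ := Submodule.Quotient.mk_surjective _ x
    exact (mayerVietorisDiff_mk r r).trans (by rw [sub_self, Submodule.Quotient.mk_zero]; rfl)

lemma mayerVietoris_exact : (mayerVietoris I J).Exact := by
  rw [ShortComplex.moduleCat_exact_iff]
  rintro ⟨x, y⟩ hxy
  obtain ⟨r, rfl⟩ := Submodule.Quotient.mk_surjective I x
  obtain ⟨s, rfl⟩ := Submodule.Quotient.mk_surjective J y
  rw [mayerVietorisDiff_mk, Submodule.Quotient.mk_eq_zero] at hxy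
  obtain ⟨p, hp, q, hq, hpq⟩ := Submodule.mem_sup.1 hxy
  have mk_eq_left : (Submodule.Quotient.mk (r - p) : A ⧸ I) = Submodule.Quotient.mk r :=
    (Submodule.Quotient.eq I).2 (by simpa using hp)
  have mk_eq_right : (Submodule.Quotient.mk (r - p) : A ⧸ J) = Submodule.Quotient.mk s :=
    (Submodule.Quotient.eq J).2 (by rwa [sub_right_comm, ← hpq, add_sub_cancel_left])
  exact ⟨Submodule.Quotient.mk (r - p), Prod.ext mk_eq_left mk_eq_right⟩

lemma mayerVietoris_shortExact : (mayerVietoris I J).ShortExact where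
  exact := mayerVietoris_exact
  mono_f := by
    refine (ModuleCat.mono_iff_injective _).2 ((injective_iff_map_eq_zero _).2 fun x hx ↦ ?_)
    obtain ⟨r, rfl⟩ := Submodule.Quotient.mk_surjective _ x
    exact (Submodule.Quotient.mk_eq_zero _).2
      ⟨(Submodule.Quotient.mk_eq_zero I).1 (congrArg Prod.fst hx),
        (Submodule.Quotient.mk_eq_zero J).1 (congrArg Prod.snd hx)⟩
  epi_g := by
    refine (ModuleCat.epi_iff_surjective _).2 fun x ↦ ?_
    obtain ⟨r, rfl⟩ := Submodule.Quotient.mk_surjective _ x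
    refine ⟨(Submodule.Quotient.mk r, Submodule.Quotient.mk 0), ?_⟩
    rw [mayerVietorisDiff_mk, sub_zero]

/-- Functoriality of the Mayer–Vietoris sequence in the pair of ideals. -/
def mayerVietorisMap {I' J' : Ideal A} (hI : I' ≤ I) (hJ : J' ≤ J) :
    mayerVietoris I' J' ⟶ mayerVietoris I J where
  τ₁ := quotientMap (inf_le_inf hI hJ)
  τ₂ := ModuleCat.ofHom ((Submodule.factor hI).prodMap (Submodule.factor hJ))
  τ₃ := quotientMap (sup_le_sup hI hJ)
  comm₁₂ := by
    refine ModuleCat.hom_ext (LinearMap.ext fun x ↦ ?_)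
    obtain ⟨r, rfl⟩ := Submodule.Quotient.mk_surjective _ x
    rfl
  comm₂₃ := by
    refine ModuleCat.hom_ext (LinearMap.ext fun ⟨x, y⟩ ↦ ?_)
    obtain ⟨r, rfl⟩ := Submodule.Quotient.mk_surjective _ x
    obtain ⟨s, rfl⟩ := Submodule.Quotient.mk_surjective _ y
    rfl

lemma exists_extPullback_sup_eq_zero_imp {ξ : Abelian.Ext (ModuleCat.of A (A ⧸ (I ⊔ J))) N (i + 1)}
    (hI : extPullback (quotientMap le_sup_left) ξ = 0)
    (hJ : extPullback (quotientMap le_sup_right) ξ = 0) :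
    ∃ η : Abelian.Ext (ModuleCat.of A (A ⧸ (I ⊓ J))) N i, ∀ {I' J' : Ideal A} (hI' : I' ≤ I)
      (hJ' : J' ≤ J), extPullback (quotientMap (inf_le_inf hI' hJ')) η = 0 →
        extPullback (quotientMap (sup_le_sup hI' hJ')) ξ = 0 := by
  obtain ⟨η, hη⟩ := exists_extPullback_eq_zero_imp mayerVietoris_shortExact
    (extPullback_mayerVietorisDiff_eq_zero hI hJ)
  exact ⟨η, fun hI' hJ' ↦ hη mayerVietoris_shortExact (mayerVietorisMap hI' hJ')⟩

lemma ExtColimitVanishes.eventually (ha : ExtColimitVanishes a i N) {n : ℕ} (hI : a ^ n ≤ I)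
    (ξ : Abelian.Ext (ModuleCat.of A (A ⧸ I)) N i) :
    ∀ᶠ m in atTop, ∃ h : a ^ m ≤ I, extPullback (quotientMap h) ξ = 0 := by
  obtain ⟨m₀, hnm₀, hm₀⟩ := ha n (extPullback (quotientMap hI) ξ)
  rw [extPullback_quotientMap_quotientMap] at hm₀
  filter_upwards [eventually_ge_atTop m₀] with m hm
  exact ⟨_, extPullback_quotientMap_eq_zero_of_le (Ideal.pow_le_pow_right hm) hm₀⟩

lemma eventually_pow_inf_pow_le_inf_pow [IsNoetherianRing A] (a b : Ideal A) (p : ℕ) :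
    ∀ᶠ q in atTop, a ^ q ⊓ b ^ q ≤ (a ⊓ b) ^ p := by
  obtain ⟨k, hk⟩ := Ideal.exists_pow_inf_eq_pow_smul a (b ^ p)
  filter_upwards [eventually_ge_atTop (k + p)] with q hq
  calc a ^ q ⊓ b ^ q
      ≤ a ^ (k + p) • ⊤ ⊓ b ^ p := by
        rw [smul_eq_mul, Ideal.mul_top]
        exact inf_le_inf (Ideal.pow_le_pow_right hq)
          (Ideal.pow_le_pow_right ((Nat.le_add_left p k).trans hq))
    _ = a ^ p • (a ^ k • ⊤ ⊓ b ^ p) := by rw [hk _ (Nat.le_add_right k p), Nat.add_sub_cancel_left]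
    _ ≤ a ^ p * b ^ p := Submodule.smul_mono le_rfl inf_le_right
    _ = (a * b) ^ p := (mul_pow a b p).symm
    _ ≤ (a ⊓ b) ^ p := Ideal.pow_right_mono Ideal.mul_le_inf p

lemma ExtColimitVanishes.sup [IsNoetherianRing A] (ha : ExtColimitVanishes a (i + 1) N)
    (hb : ExtColimitVanishes b (i + 1) N) (hab : ExtColimitVanishes (a ⊓ b) i N) :
    ExtColimitVanishes (a ⊔ b) (i + 1) N := by
  intro n ξ
  obtain ⟨m, ⟨ham, hξa⟩, hbm, hξb⟩ :=
    ((ha.eventually (Ideal.pow_right_mono le_sup_left n) ξ).and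
      (hb.eventually (Ideal.pow_right_mono le_sup_right n) ξ)).exists
  obtain ⟨η, hη⟩ := exists_extPullback_sup_eq_zero_imp
    (ξ := extPullback (quotientMap (sup_le ham hbm)) ξ)
    (by rwa [extPullback_quotientMap_quotientMap]) (by rwa [extPullback_quotientMap_quotientMap])
  have inf_pow_le : (a ⊓ b) ^ m ≤ a ^ m ⊓ b ^ m :=
    le_inf (Ideal.pow_right_mono inf_le_left m) (Ideal.pow_right_mono inf_le_right m)
  obtain ⟨p, hp, hηp⟩ := (hab.eventually inf_pow_le η).exists
  obtain ⟨q, hq, hmq, hnq⟩ := ((eventually_pow_inf_pow_le_inf_pow a b p).and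
    ((eventually_ge_atTop m).and (eventually_ge_atTop n))).exists
  have pullback_eq_zero := hη (Ideal.pow_le_pow_right hmq) (Ideal.pow_le_pow_right hmq)
    (extPullback_quotientMap_eq_zero_of_le hq hηp)
  rw [extPullback_quotientMap_quotientMap] at pullback_eq_zero
  exact ⟨q + q, hnq.trans (Nat.le_add_left q q),
    extPullback_quotientMap_eq_zero_of_le Ideal.sup_pow_add_le_pow_sup_pow pullback_eq_zero⟩

lemma cohDim_sup_le [IsNoetherianRing A] (a b : Ideal A) (N : Type u) [AddCommGroup N]
    [Module A N] :
    cohDim (a ⊔ b) N ≤ max (max (cohDim a N) (cohDim b N)) (cohDim (a ⊓ b) N + 1) := by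
  refine cohDim_le_iff.2 fun i hi ↦ ?_
  obtain ⟨hiab, hi⟩ := max_lt_iff.1 hi
  obtain ⟨hia, hib⟩ := max_lt_iff.1 hiab
  cases i with
  | zero => simp at hi
  | succ i =>
    have hic : cohDim (a ⊓ b) N < (i + 1 : ℕ) := by
      rw [Nat.cast_succ (i + 1)] at hi
      exact lt_of_add_lt_add_right hi
    exact .sup (cohDim_le_iff.1 le_rfl _ hia) (cohDim_le_iff.1 le_rfl _ hib)
      (cohDim_le_iff.1 le_rfl _ hic)

end MayerVietoris

lemma inf_pow_two_smul_top_le_of_modColon_eq {A : Type u} [CommRing A] {N : Type u}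
    [AddCommGroup N] [Module A N] {I a b : Ideal A}
    (h : Submodule.modColon (I • (⊤ : Submodule A N)) a = b • (⊤ : Submodule A N)) :
    (a ⊓ b) ^ 2 • (⊤ : Submodule A N) ≤ I • ⊤ := by
  rw [pow_two, mul_smul, Submodule.smul_le]
  intro r hr y hy
  have y_mem_colon : y ∈ Submodule.modColon (I • (⊤ : Submodule A N)) a :=
    h ▸ Submodule.smul_mono inf_le_right le_rfl hy
  simp only [Submodule.modColon, Submodule.mem_iInf] at y_mem_colon
  exact y_mem_colon r hr.1

theorem stmt3_general {A : Type u} [CommRing A] [IsNoetherianRing A] {N : Type u}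
    [AddCommGroup N] [Module A N] (a b : Ideal A) {rs : List A} (hreg : IsWeaklyRegular N rs)
    (hrs : Ideal.ofList rs ≤ a ⊓ b) {k : ℕ}
    (hk : (a ⊓ b) ^ k • (⊤ : Submodule A N) ≤ Ideal.ofList rs • ⊤) :
    cohDim (a + b) N ≤ max (max (cohDim a N) (cohDim b N)) ((rs.length : ℕ∞) + 1) :=
  (cohDim_sup_le a b N).trans <|
    max_le_max le_rfl (add_le_add_left (cohDim_le_length hreg hrs hk) 1)

theorem stmt3 (a b : Ideal R) (rs : List R)
    (hreg : RingTheory.Sequence.IsRegular M rs)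
    (ht : rs.length = gradeM (Ideal.ofList rs) M)
    (h : Ideal.IsLinkedBy M (Ideal.ofList rs) a b) :
    cohDim (a + b) M ≤
      max (max (cohDim a M) (cohDim b M)) ((rs.length : ℕ∞) + 1) := by
  obtain ⟨-, hrs, -, -, modColon_eq, -⟩ := h
  exact stmt3_general a b hreg.toIsWeaklyRegular hrs
    (inf_pow_two_smul_top_le_of_modColon_eq modColon_eq)
end
end

section
/- Let (R, m) be a Noetherian local ring and x_1, …, x_n ∈ m an R-regular sequence with n ≥ 4. Then for all 1 < j ≤ ⌊n/2⌋ and any permutation (i_1, …, i_{2j}) of distinct indices from {1, …, n}, the ideals (x_{i_1}, …, x_{i_j}) and (x_{i_{j+1}}, …, x_{i_{2j}}) are not linked over R. -/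
universe u

open RingTheory.Sequence CategoryTheory

noncomputable section

/-- Two ideals `a` and `b` of `R` are linked (over `R`) if there is an ideal
`I ⊆ a ⊓ b` generated by an `R`-regular sequence with `b = I :_R a` and `a = I :_R b`. -/
def LinkedOverR {R : Type u} [CommRing R] (a b : Ideal R) : Prop :=
  ∃ I : Ideal R,
    (∃ rs : List R, RingTheory.Sequence.IsRegular R rs ∧ I = Ideal.ofList rs) ∧
    I ≤ a ⊓ b ∧ b = Submodule.colon I a ∧ a = Submodule.colon I b

/-! Write `a` and `b` for the ideals generated by the `x i` with `i ∈ S` and by the `x j` with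
`j ∈ T`. If they are linked by `I`, then `a * b ≤ I ≤ a ⊓ b`. Fix `i ∈ S` and distinct `j, k ∈ T`.
Relations between the members of a regular sequence generating `I` have coefficients in `I`, so
`x k * (x i * x j) = x j * (x i * x k)` shows that `x i * x j` is a combination of that sequence
with coefficients in `(I + (x j)) : x k ≤ a + b`; hence `x i * x j ∈ (a + b) * (a ⊓ b)`. The family
`x` is regular in any order, so `x i` can be cancelled modulo the other generators of `a`, and then
`x j` modulo the other generators of `a` and `b`. What is left is `1 ∈ a + b`. -/

section WeaklyRegular

variable {R : Type*} [CommRing R]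

theorem ofList_ofFn {t : ℕ} (z : Fin t → R) :
    Ideal.ofList (List.ofFn z) = Ideal.span (Set.range z) :=
  congrArg Ideal.span (Set.ext fun _ => List.mem_ofFn)

theorem isSMulRegular_quotient_of_isWeaklyRegular_append {rs : List R} {r : R}
    (h : IsWeaklyRegular R (rs ++ [r])) : IsSMulRegular (R ⧸ Ideal.ofList rs) r := by
  have hr := ((isWeaklyRegular_append_iff R rs [r]).1 h).2
  rw [isWeaklyRegular_singleton_iff] at hr
  rw [isSMulRegular_quotient_iff_mem_of_smul_mem] at hr ⊢
  simpa only [smul_eq_mul, Ideal.mul_top] using hr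

theorem mem_span_range_of_sum_mul_eq_zero {t : ℕ} {z : Fin t → R}
    (hz : IsWeaklyRegular R (List.ofFn z)) {c : Fin t → R} (hc : ∑ m, c m * z m = 0) (m : Fin t) :
    c m ∈ Ideal.span (Set.range z) := by
  induction t with
  | zero => exact m.elim0
  | succ t ih =>
    set z' : Fin t → R := fun m => z m.castSucc
    have hle : Ideal.span (Set.range z') ≤ Ideal.span (Set.range z) :=
      Ideal.span_mono (Set.range_comp_subset_range Fin.castSucc z)
    rw [List.ofFn_succ', List.concat_eq_append] at hz
    rw [Fin.sum_univ_castSucc] at hc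
    have hlast : c (Fin.last t) ∈ Ideal.span (Set.range z') := by
      have hreg := isSMulRegular_quotient_of_isWeaklyRegular_append hz
      rw [ofList_ofFn] at hreg
      refine mem_of_isSMulRegular_quotient_of_smul_mem hreg ?_
      rw [smul_eq_mul, mul_comm, eq_neg_of_add_eq_zero_right hc]
      exact neg_mem (Ideal.sum_mem _ fun m _ =>
        Ideal.mul_mem_left _ _ (Ideal.subset_span ⟨m, rfl⟩))
    induction m using Fin.lastCases with
    | last => exact hle hlast
    | cast m =>
      obtain ⟨d, hd⟩ := Ideal.mem_span_range_iff_exists_fun.1 hlast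
      have hinit : ∑ m, (c m.castSucc + d m * z (Fin.last t)) * z' m = 0 := by
        rw [← hc, ← hd, Finset.sum_mul, ← Finset.sum_add_distrib]
        exact Finset.sum_congr rfl fun m _ => by ring
      have hmem := hle (ih ((isWeaklyRegular_append_iff R _ _).1 hz).1 hinit m)
      exact (Ideal.add_mem_iff_left _
        (Ideal.mul_mem_left _ _ (Ideal.subset_span (Set.mem_range_self (Fin.last t))))).1 hmem

theorem mem_colon_mul_ofList_of_mul_eq_mul {rs : List R} (hrs : IsWeaklyRegular R rs) {u v p q : R}
    (hp : p ∈ Ideal.ofList rs) (hq : q ∈ Ideal.ofList rs) (h : u * p = v * q) :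
    p ∈ (Ideal.ofList rs ⊔ Ideal.span {v}).colon {u} * Ideal.ofList rs := by
  have hspan : Ideal.ofList rs = Ideal.span (Set.range rs.get) := by
    rw [← ofList_ofFn, List.ofFn_get]
  rw [hspan] at hp hq ⊢
  obtain ⟨c, rfl⟩ := Ideal.mem_span_range_iff_exists_fun.1 hp
  obtain ⟨d, rfl⟩ := Ideal.mem_span_range_iff_exists_fun.1 hq
  have hsyz : ∑ m, (u * c m - v * d m) * rs.get m = 0 := by
    simp only [sub_mul, Finset.sum_sub_distrib, mul_assoc, ← Finset.mul_sum, h, sub_self]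
  refine Ideal.sum_mem _ fun m _ => Ideal.mul_mem_mul ?_ (Ideal.subset_span ⟨m, rfl⟩)
  have hm := mem_span_range_of_sum_mul_eq_zero ((List.ofFn_get rs).symm ▸ hrs) hsyz m
  rw [Submodule.mem_colon_singleton, smul_eq_mul, mul_comm, ← sub_add_cancel (u * c m) (v * d m)]
  exact add_mem (Ideal.mem_sup_left hm)
    (Ideal.mem_sup_right (Ideal.mul_mem_right _ _ (Ideal.mem_span_singleton_self v)))

end WeaklyRegular

/-- A family of elements of `R` which is weakly regular in any order: each member is a
nonzerodivisor modulo the ideal generated by any set of other members. It stands in for regular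
sequences in Noetherian local rings, which may be permuted. As for `IsWeaklyRegular`, the ideal
generated by the whole family may be the unit ideal. -/
def IsPermutablyWeaklyRegular {R ν : Type*} [CommRing R] (x : ν → R) : Prop :=
  ∀ (U : Set ν) (i : ν), i ∉ U → IsSMulRegular (R ⧸ Ideal.span (x '' U)) (x i)

theorem isPermutablyWeaklyRegular_of_isRegular_ofFn {R : Type*} [CommRing R] [IsNoetherianRing R]
    [IsLocalRing R] {n : ℕ} {x : Fin n → R} (hx : IsRegular R (List.ofFn x)) :
    IsPermutablyWeaklyRegular x := by
  classical
  intro U i hi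
  set l := U.toFinset.toList
  have hnodup : (l ++ [i]).Nodup :=
    (Finset.nodup_toList _).append (List.nodup_singleton i) (by simpa [l] using hi)
  have hsub : (l ++ [i]).Subperm (List.finRange n) := hnodup.subperm fun k _ => List.mem_finRange k
  have hperm :=
    (List.subperm_append_diff_self_of_count_le (List.subperm_ext_iff.1 hsub)).symm.map x
  rw [← List.ofFn_eq_map, List.map_append, List.map_append] at hperm
  have hreg := (IsLocalRing.isRegular_of_perm hx hperm).toIsWeaklyRegular
  have hspan : Ideal.ofList (l.map x) = Ideal.span (x '' U) := by
    rw [Ideal.ofList]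
    congr 1
    ext
    simp [l]
  rw [← hspan]
  exact isSMulRegular_quotient_of_isWeaklyRegular_append
    ((isWeaklyRegular_append_iff R _ _).1 hreg).1

namespace IsPermutablyWeaklyRegular

variable {R ν : Type*} [CommRing R] {x : ν → R} {S T U : Set ν} {i j k : ν}

theorem comp {μ : Type*} (hx : IsPermutablyWeaklyRegular x) {f : μ → ν}
    (hf : Function.Injective f) : IsPermutablyWeaklyRegular (x ∘ f) := by
  intro U i hi
  rw [Set.image_comp]
  exact hx (f '' U) (f i) (hf.mem_set_image.not.2 hi)

theorem mem_of_mul_mem (hx : IsPermutablyWeaklyRegular x) (hi : i ∉ U) {s : R}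
    (hs : x i * s ∈ Ideal.span (x '' U)) : s ∈ Ideal.span (x '' U) :=
  mem_of_isSMulRegular_quotient_of_smul_mem (hx U i hi) hs

theorem mem_sup_of_mul_mem (hx : IsPermutablyWeaklyRegular x) (hi : i ∉ U) {J : Ideal R} {s : R}
    (hs : x i * s ∈ Ideal.span {x i} * J ⊔ Ideal.span (x '' U)) :
    s ∈ J ⊔ Ideal.span (x '' U) := by
  obtain ⟨_, hxt, r, hr, heq⟩ := Submodule.mem_sup.1 hs
  obtain ⟨t, ht, rfl⟩ := Ideal.mem_span_singleton_mul.1 hxt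
  have hmem : s - t ∈ Ideal.span (x '' U) :=
    hx.mem_of_mul_mem hi (by rwa [mul_sub, ← heq, add_sub_cancel_left])
  rw [← add_sub_cancel t s]
  exact add_mem (Ideal.mem_sup_left ht) (Ideal.mem_sup_right hmem)

theorem span_insert_inf_le (hx : IsPermutablyWeaklyRegular x) (hiU : i ∉ U) (hiT : i ∉ T) :
    Ideal.span (x '' insert i U) ⊓ Ideal.span (x '' T) ≤
      Ideal.span {x i} * Ideal.span (x '' (T ∪ U)) ⊔ Ideal.span (x '' U) := by
  rintro _ ⟨hS, hT⟩
  rw [SetLike.mem_coe, Set.image_insert_eq, Ideal.span_insert] at hS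
  obtain ⟨_, hxc, r, hr, rfl⟩ := Submodule.mem_sup.1 hS
  obtain ⟨c, rfl⟩ := Ideal.mem_span_singleton.1 hxc
  have hc : c ∈ Ideal.span (x '' (T ∪ U)) := by
    refine hx.mem_of_mul_mem (i := i) (by simp [hiT, hiU]) ?_
    rw [Set.image_union, Ideal.span_union, ← add_sub_cancel_right (x i * c) r]
    exact sub_mem (Ideal.mem_sup_left hT) (Ideal.mem_sup_right hr)
  exact add_mem (Ideal.mem_sup_left (Ideal.mul_mem_mul (Ideal.mem_span_singleton_self _) hc))
    (Ideal.mem_sup_right hr)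

theorem sup_eq_top_of_mul_mem_mul_inf (hx : IsPermutablyWeaklyRegular x) (hST : Disjoint S T)
    (hi : i ∈ S) (hj : j ∈ T) {d : Ideal R}
    (h : x i * x j ∈ d * (Ideal.span (x '' S) ⊓ Ideal.span (x '' T))) :
    d ⊔ Ideal.span (x '' (S ∪ T)) = ⊤ := by
  obtain ⟨U, hiU, rfl⟩ : ∃ U, i ∉ U ∧ insert i U = S := ⟨S \ {i}, by simp, by simp [hi]⟩
  obtain ⟨V, hjV, rfl⟩ : ∃ V, j ∉ V ∧ insert j V = T := ⟨T \ {j}, by simp, by simp [hj]⟩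
  have hiT : i ∉ insert j V := hST.notMem_of_mem_left (Set.mem_insert i U)
  have hjU : j ∉ U := fun hjU => hST.notMem_of_mem_right hj (Set.mem_insert_of_mem i hjU)
  have hxj : x j ∈ d * Ideal.span (x '' (insert j V ∪ U)) ⊔ Ideal.span (x '' U) := by
    refine hx.mem_sup_of_mul_mem hiU (SetLike.le_def.1 ?_ h)
    calc d * (Ideal.span (x '' insert i U) ⊓ Ideal.span (x '' insert j V))
        ≤ d * (Ideal.span {x i} * Ideal.span (x '' (insert j V ∪ U)) ⊔ Ideal.span (x '' U)) :=
          Ideal.mul_mono_right (hx.span_insert_inf_le hiU hiT)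
      _ ≤ Ideal.span {x i} * (d * Ideal.span (x '' (insert j V ∪ U))) ⊔ Ideal.span (x '' U) := by
          rw [Ideal.mul_sup, mul_left_comm]
          exact sup_le_sup_left Ideal.mul_le_right _
  have hone : (1 : R) ∈ d ⊔ Ideal.span (x '' (V ∪ U)) := by
    refine hx.mem_sup_of_mul_mem (i := j) (by simp [hjU, hjV]) ?_
    rw [mul_one]
    refine SetLike.le_def.1 ?_ hxj
    rw [Set.insert_union, Set.image_insert_eq, Ideal.span_insert, Ideal.mul_sup, mul_comm d,
      sup_assoc]
    exact sup_le_sup_left (sup_le Ideal.mul_le_right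
      (Ideal.span_mono (Set.image_mono Set.subset_union_right))) _
  refine (Ideal.eq_top_iff_one _).2 (sup_le_sup_left (Ideal.span_mono (Set.image_mono ?_)) d hone)
  grind

theorem colon_singleton_le (hx : IsPermutablyWeaklyRegular x) (hk : k ∉ U) :
    (Ideal.span (x '' U)).colon {x k} ≤ Ideal.span (x '' U) := by
  intro s hs
  rw [Submodule.mem_colon_singleton, smul_eq_mul, mul_comm] at hs
  exact hx.mem_of_mul_mem hk hs

theorem span_union_eq_top_of_mul_le_of_le_inf (hx : IsPermutablyWeaklyRegular x)
    (hST : Disjoint S T) (hS : S.Nonempty) (hT : T.Nontrivial) {rs : List R}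
    (hrs : IsWeaklyRegular R rs)
    (hmul : Ideal.span (x '' S) * Ideal.span (x '' T) ≤ Ideal.ofList rs)
    (hinf : Ideal.ofList rs ≤ Ideal.span (x '' S) ⊓ Ideal.span (x '' T)) :
    Ideal.span (x '' (S ∪ T)) = ⊤ := by
  obtain ⟨i, hi⟩ := hS
  obtain ⟨j, hj, k, hk, hjk⟩ := hT
  have hprod : ∀ l ∈ T, x i * x l ∈ Ideal.ofList rs := fun l hl => hmul
    (Ideal.mul_mem_mul (Ideal.subset_span ⟨i, hi, rfl⟩) (Ideal.subset_span ⟨l, hl, rfl⟩))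
  have hcolon : (Ideal.ofList rs ⊔ Ideal.span {x j}).colon {x k} ≤ Ideal.span (x '' (S ∪ T)) :=
    calc (Ideal.ofList rs ⊔ Ideal.span {x j}).colon {x k}
        ≤ (Ideal.span (x '' insert j S)).colon {x k} := by
          refine Submodule.colon_mono ?_ le_rfl
          rw [Set.image_insert_eq, Ideal.span_insert, sup_comm]
          exact sup_le_sup_left (hinf.trans inf_le_left) _
      _ ≤ Ideal.span (x '' insert j S) :=
          hx.colon_singleton_le (by simp [hjk.symm, hST.notMem_of_mem_right hk])
      _ ≤ Ideal.span (x '' (S ∪ T)) := Ideal.span_mono (Set.image_mono (by grind))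
  have hsyz := mem_colon_mul_ofList_of_mul_eq_mul hrs (hprod j hj) (hprod k hk)
    (show x k * (x i * x j) = x j * (x i * x k) by ring)
  have htop := hx.sup_eq_top_of_mul_mem_mul_inf hST hi hj (Ideal.mul_mono hcolon hinf hsyz)
  rwa [sup_idem] at htop

end IsPermutablyWeaklyRegular

theorem LinkedOverR.exists_isWeaklyRegular_mul_le_le_inf {R : Type u} [CommRing R]
    {a b : Ideal R} (h : LinkedOverR a b) :
    ∃ rs : List R, IsWeaklyRegular R rs ∧ a * b ≤ Ideal.ofList rs ∧ Ideal.ofList rs ≤ a ⊓ b := by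
  obtain ⟨_, ⟨rs, hrs, rfl⟩, hinf, -, ha⟩ := h
  refine ⟨rs, hrs.toIsWeaklyRegular, Ideal.mul_le.2 fun r hr s hs => ?_, hinf⟩
  rw [ha] at hr
  exact Submodule.mem_colon.1 hr s hs

theorem span_image_ne_top_of_forall_mem_maximalIdeal {R ν : Type*} [CommRing R] [IsLocalRing R]
    {x : ν → R} (hx : ∀ i, x i ∈ IsLocalRing.maximalIdeal R) (U : Set ν) :
    Ideal.span (x '' U) ≠ ⊤ :=
  ne_top_of_le_ne_top (IsLocalRing.maximalIdeal.isMaximal R).ne_top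
    (Ideal.span_le.2 (Set.image_subset_iff.2 fun i _ => hx i))

theorem setOf_exists_and_eq_image {α β : Type*} (p : α → Prop) (f : α → β) :
    {b | ∃ a, p a ∧ b = f a} = f '' {a | p a} := by
  simp only [Set.image, Set.mem_ofPred_eq, eq_comm]

theorem stmt5_general {R : Type u} {ν : Type*} [CommRing R] {x : ν → R}
    (hx : IsPermutablyWeaklyRegular x) {S T : Set ν} (hST : Disjoint S T) (hS : S.Nonempty)
    (hT : T.Nontrivial) (htop : Ideal.span (x '' (S ∪ T)) ≠ ⊤) :
    ¬ LinkedOverR (Ideal.span (x '' S)) (Ideal.span (x '' T)) := by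
  intro h
  obtain ⟨rs, hrs, hmul, hinf⟩ := h.exists_isWeaklyRegular_mul_le_le_inf
  exact htop (hx.span_union_eq_top_of_mul_le_of_le_inf hST hS hT hrs hmul hinf)

theorem stmt5 {R : Type u} [CommRing R] [IsNoetherianRing R] [IsLocalRing R]
    (n : ℕ) (hn : 4 ≤ n) (x : Fin n → R)
    (hx : ∀ i, x i ∈ IsLocalRing.maximalIdeal R)
    (hreg : RingTheory.Sequence.IsRegular R (List.ofFn x))
    (j : ℕ) (hj1 : 1 < j) (hj2 : 2 * j ≤ n)
    (ι : Fin (2 * j) → Fin n) (hι : Function.Injective ι) :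
    ¬ LinkedOverR (Ideal.span {r | ∃ k : Fin (2 * j), (k : ℕ) < j ∧ r = x (ι k)})
        (Ideal.span {r | ∃ k : Fin (2 * j), j ≤ (k : ℕ) ∧ r = x (ι k)}) := by
  rw [setOf_exists_and_eq_image, setOf_exists_and_eq_image]
  exact stmt5_general ((isPermutablyWeaklyRegular_of_isRegular_ofFn hreg).comp hι)
    (Set.disjoint_left.2 fun k (hlt : (k : ℕ) < j) => not_le_of_gt hlt)
    ⟨⟨0, by lia⟩, show 0 < j by lia⟩ ⟨⟨j, by lia⟩, le_refl j, ⟨j + 1, by lia⟩, j.le_succ, by simp⟩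
    (span_image_ne_top_of_forall_mem_maximalIdeal (fun k => hx (ι k)) _)
end
end

section
/- Let a and b be ideals linked by I over M. Then the quotient module M/aM embeds into a finite direct sum of copies of M/IM. -/
universe u

open RingTheory.Sequence CategoryTheory

noncomputable section

variable {R : Type u} [CommRing R] [IsNoetherianRing R]
variable {M : Type u} [AddCommGroup M] [Module R M] [Module.Finite R M] [Nontrivial M]

section

omit [IsNoetherianRing R] [Module.Finite R M] [Nontrivial M]

lemma mem_modColon_iff_le_colon {N : Submodule R M} {b : Ideal R} {m : M} :
    m ∈ N.modColon b ↔ b ≤ N.colon {m} := by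
  simp only [Submodule.modColon, Submodule.mem_iInf, Submodule.mem_comap, LinearMap.lsmul_apply,
    SetLike.le_def, Submodule.mem_colon_singleton]

lemma mem_modColon_span_iff {N : Submodule R M} {S : Set R} {m : M} :
    m ∈ N.modColon (Ideal.span S) ↔ ∀ r ∈ S, r • m ∈ N := by
  simp only [mem_modColon_iff_le_colon, Ideal.span_le, Set.subset_def, SetLike.mem_coe,
    Submodule.mem_colon_singleton]

variable {ι : Type*}

/-- The linear map `M → (M ⧸ N)^ι`, `m ↦ (s i • m + N)ᵢ`. When the family `s` generates `b`, it is
`M → Hom(b, M ⧸ N)`, `m ↦ (r ↦ r • m + N)`, followed by evaluation at the generators. -/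
def smulMkQPi (N : Submodule R M) (s : ι → R) : M →ₗ[R] (ι → M ⧸ N) :=
  LinearMap.pi fun i ↦ N.mkQ ∘ₗ LinearMap.lsmul R M (s i)

lemma ker_smulMkQPi (N : Submodule R M) (s : ι → R) :
    LinearMap.ker (smulMkQPi N s) = N.modColon (Ideal.span (Set.range s)) := by
  ext m
  simp only [smulMkQPi, LinearMap.ker_pi, LinearMap.ker_comp, Submodule.ker_mkQ,
    Submodule.mem_iInf, Submodule.mem_comap, LinearMap.lsmul_apply, mem_modColon_span_iff,
    Set.forall_mem_range]

theorem stmt7_general (N : Submodule R M) {b : Ideal R} (hb : b.FG) :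
    ∃ (n : ℕ) (f : (M ⧸ N.modColon b) →ₗ[R] (Fin n → M ⧸ N)), Function.Injective f := by
  obtain ⟨n, s, rfl⟩ := Submodule.fg_iff_exists_fin_generating_family.mp hb
  have hker := (ker_smulMkQPi N s).symm
  exact ⟨n, Submodule.liftQ _ (smulMkQPi N s) hker.le,
    LinearMap.ker_eq_bot.mp (Submodule.ker_liftQ_eq_bot' _ _ hker)⟩

end

theorem stmt7 (I a b : Ideal R) (h : Ideal.IsLinkedBy M I a b) :
    ∃ (n : ℕ)
      (f : (M ⧸ (a • (⊤ : Submodule R M))) →ₗ[R]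
        (Fin n → M ⧸ (I • (⊤ : Submodule R M)))),
      Function.Injective f := by
  obtain ⟨-, -, -, -, -, hb⟩ := h
  exact hb ▸ stmt7_general _ (IsNoetherian.noetherian b)
end
end
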